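/- (Standard coercivity from a uniform Fourier lower bound.) Let 0 < s < 1 and let the collision kernel b : (0, π/2] → [0,∞) be measurable and satisfy b(cos θ)·θ^{2+2s} → K as θ → 0+ for some K > 0. Let φ : ℝ³ → ℂ be a characteristic function such that there exists κ > 0 with 1 − |φ(η)| ≥ κ · min(1, |η|²) for all η ∈ ℝ³. Then there exist R > 0 and c > 0 such that for every ξ ∈ ℝ³ with |ξ| ≥ R: ∫_{S²} b(ξ·σ/|ξ|) ( 1 − |φ(ξ⁻)| ) dσ ≥ c |ξ|^{2s}, where ξ⁻ = (ξ − |ξ|σ)/2 and the integral is with respect to the surface measure on S². -/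

import Mathlib

noncomputable section

open MeasureTheory Real Filter Metric Set
open scoped RealInnerProductSpace Topology

/-- ℝ³ as a Euclidean space. -/
abbrev E3 : Type := EuclideanSpace ℝ (Fin 3)

/-- The surface measure on the unit sphere S² ⊂ ℝ³. -/
def sphμ : Measure (sphere (0 : E3) 1) := (volume : Measure E3).toSphere

/-- The characteristic function (Fourier transform) of a Borel measure on ℝ³,
`ψ(ξ) = ∫ e^{-i v·ξ} dΨ(v)`. -/
def charFn (Ψ : Measure E3) (ξ : E3) : ℂ :=
  ∫ v, Complex.exp (-(Complex.I * (⟪v, ξ⟫ : ℂ))) ∂Ψ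

/-- `ψ` is a characteristic function of some Borel probability measure on ℝ³. -/
def IsCharFn (ψ : E3 → ℂ) : Prop :=
  ∃ Ψ : Measure E3, IsProbabilityMeasure Ψ ∧ ψ = charFn Ψ

/-- Finiteness of `‖φ - 1‖_α`, i.e. the quantitative part of membership in `𝒦^α`. -/
def KBdd (α : ℝ) (φ : E3 → ℂ) : Prop :=
  ∃ C : ℝ, ∀ ξ : E3, ξ ≠ 0 → ‖φ ξ - 1‖ ≤ C * ‖ξ‖ ^ α

/-- Membership in the space `𝒦^α`. -/
def memK (α : ℝ) (φ : E3 → ℂ) : Prop := IsCharFn φ ∧ KBdd α φ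

/-- The distance `‖φ - φ'‖_α = sup_{ξ ≠ 0} |φ(ξ) - φ'(ξ)|/|ξ|^α` on `𝒦^α`. -/
def Kdist (α : ℝ) (φ φ' : E3 → ℂ) : ℝ :=
  ⨆ ξ : {ξ : E3 // ξ ≠ 0}, ‖φ ξ.1 - φ' ξ.1‖ / ‖(ξ.1 : E3)‖ ^ α

/-- `ξ⁺ = ξ/2 + (|ξ|/2)σ`. -/
def xiPlus (ξ : E3) (σ : sphere (0 : E3) 1) : E3 := (1/2 : ℝ) • ξ + (‖ξ‖ / 2) • (σ : E3)

/-- `ξ⁻ = ξ/2 - (|ξ|/2)σ`. -/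
def xiMinus (ξ : E3) (σ : sphere (0 : E3) 1) : E3 := (1/2 : ℝ) • ξ - (‖ξ‖ / 2) • (σ : E3)

/-- The Bobylev collision integrand at time `t`, frequency `ξ`, direction `σ`. -/
def bobylevIntegrand (b : ℝ → ℝ) (ψ : ℝ → E3 → ℂ) (t : ℝ) (ξ : E3)
    (σ : sphere (0 : E3) 1) : ℂ :=
  (b (⟪ξ, (σ : E3)⟫ / ‖ξ‖) : ℂ) *
    (ψ t (xiPlus ξ σ) * ψ t (xiMinus ξ σ) - ψ t ξ)

/-- `ψ : [0,∞) × ℝ³ → ℂ` is a solution of the Fourier-transformed (Bobylev)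
homogeneous Boltzmann Cauchy problem with collision kernel `b` and initial datum `ψ₀`. -/
structure IsBobylevSolution (b : ℝ → ℝ) (ψ : ℝ → E3 → ℂ) (ψ₀ : E3 → ℂ) : Prop where
  cont : ContinuousOn (fun p : ℝ × E3 => ψ p.1 p.2) (Set.Ici 0 ×ˢ Set.univ)
  init : ψ 0 = ψ₀
  isCharFn : ∀ t ≥ 0, IsCharFn (ψ t)
  integrable : ∀ t ≥ 0, ∀ ξ : E3, Integrable (bobylevIntegrand b ψ t ξ) sphμ
  eq : ∀ t ≥ 0, ∀ ξ : E3, HasDerivWithinAt (fun τ => ψ τ ξ)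
      (∫ σ, bobylevIntegrand b ψ t ξ σ ∂sphμ) (Set.Ici 0) t

/-- Continuity of `t ↦ ψ(t,·)` from `[0,∞)` into the metric space `(𝒦^α, ‖·‖_α)`. -/
def KContinuous (α : ℝ) (ψ : ℝ → E3 → ℂ) : Prop :=
  ∀ t₀ ∈ Set.Ici (0:ℝ), Tendsto (fun t => Kdist α (ψ t) (ψ t₀)) (𝓝[Set.Ici (0:ℝ)] t₀) (𝓝 0)

/-- The angular singularity assumption `b(cos θ) θ^{2+2s} → K` as `θ → 0+`. -/
def KernelSingular (b : ℝ → ℝ) (s K : ℝ) : Prop :=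
  Tendsto (fun θ : ℝ => b (Real.cos θ) * θ ^ (2 + 2*s)) (𝓝[>] 0) (𝓝 K)

/-!
Only grazing directions at the scale `ε = |ξ|⁻¹` matter. If the chord `|σ - ξ/|ξ||` lies between
`ε/2` and `ε`, then the angle between `ξ` and `σ` lies between `ε/2` and `2ε`, so the kernel is at
least a multiple of `|ξ|^(d-1+2s)`, whereas `|ξ⁻|`, which is `|ξ|/2` times the chord, is at least
`1/4`, so the Fourier factor is bounded below by a constant. In dimension `d ≥ 2` these directions
have measure at least a multiple of `ε^(d-1)`, and the product of the three bounds is a multiple of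
`|ξ|^(2s)`.

The measure of a spherical cap is bounded below by comparison with a solid ball: in polar
coordinates, the ball of radius `ε/2` about a unit vector lies in the product of the cap of radius
`ε` about it and a radial interval of length `ε`, so that the cap has measure at least a multiple
of `ε^d/ε`.
-/

lemma volumeIoiPow_preimage_Ioo_le (n : ℕ) {a b : ℝ} (hb : 0 ≤ b) :
    Measure.volumeIoiPow n (Subtype.val ⁻¹' Ioo a b) ≤ ENNReal.ofReal (b ^ n * (b - a)) := by
  have hmeas : MeasurableSet (Subtype.val ⁻¹' Ioo a b : Set (Ioi (0 : ℝ))) :=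
    measurable_subtype_coe measurableSet_Ioo
  have hvol : (volume : Measure ℝ).comap (Subtype.val : Ioi (0 : ℝ) → ℝ) (Subtype.val ⁻¹' Ioo a b)
      ≤ ENNReal.ofReal (b - a) := by
    rw [comap_subtype_coe_apply measurableSet_Ioi, ← Real.volume_Ioo]
    exact measure_mono (image_preimage_subset _ _)
  rw [Measure.volumeIoiPow, withDensity_apply _ hmeas]
  calc _ ≤ ∫⁻ _ in Subtype.val ⁻¹' Ioo a b, ENNReal.ofReal (b ^ n)
          ∂(volume : Measure ℝ).comap (Subtype.val : Ioi (0 : ℝ) → ℝ) := by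
        refine setLIntegral_mono' hmeas fun r hr => ENNReal.ofReal_le_ofReal ?_
        exact pow_le_pow_left₀ r.2.out.le hr.2.le n
    _ ≤ ENNReal.ofReal (b ^ n) * ENNReal.ofReal (b - a) := by
        rw [setLIntegral_const]
        gcongr
    _ = _ := (ENNReal.ofReal_mul (by positivity)).symm

section Sphere

variable {E : Type*} [NormedAddCommGroup E] [NormedSpace ℝ E]

lemma exists_dist_eq_of_mem_sphere (hE : 1 < Module.rank ℝ E) (x : sphere (0 : E) 1) {t : ℝ}
    (ht : t ∈ Icc (0 : ℝ) 2) : ∃ y : sphere (0 : E) 1, dist y x = t := by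
  have : PreconnectedSpace (sphere (0 : E) 1) :=
    Subtype.preconnectedSpace (isPreconnected_sphere hE 0 1)
  have hantipode : dist (-x) x = 2 := by
    rw [Subtype.dist_eq, dist_eq_norm, coe_neg_sphere, ← neg_add', norm_neg, ← two_smul ℝ,
      norm_smul, norm_eq_of_mem_sphere, Real.norm_two, mul_one]
  have himage := isPreconnected_univ.intermediate_value (mem_univ x) (mem_univ (-x))
    (f := fun y => dist y x) (by fun_prop)
  rw [dist_self, hantipode] at himage
  simpa using himage ht

lemma homeomorphUnitSphereProd_mem_ball_prod_Ioo (x : sphere (0 : E) 1) {ε : ℝ}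
    (y : ({0}ᶜ : Set E)) (hy : (y : E) ∈ ball (x : E) (ε / 2)) :
    homeomorphUnitSphereProd E y ∈
      ball x ε ×ˢ (Subtype.val ⁻¹' Ioo (1 - ε / 2) (1 + ε / 2)) := by
  have hy0 : 0 < ‖(y : E)‖ := norm_pos_iff.2 y.2
  rw [mem_ball, dist_eq_norm] at hy
  have hradius : |‖(y : E)‖ - 1| < ε / 2 := by
    simpa using (abs_norm_sub_norm_le (y : E) x).trans_lt hy
  have hproj : ‖‖(y : E)‖⁻¹ • (y : E) - y‖ = |‖(y : E)‖ - 1| :=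
    calc _ = ‖(‖(y : E)‖⁻¹ - 1) • (y : E)‖ := by rw [sub_smul, one_smul]
      _ = |‖(y : E)‖⁻¹ - 1| * |‖(y : E)‖| := by rw [norm_smul, Real.norm_eq_abs, abs_norm]
      _ = _ := by rw [← abs_mul, sub_one_mul, inv_mul_cancel₀ hy0.ne', abs_sub_comm]
  refine ⟨?_, ?_⟩
  · rw [mem_ball, Subtype.dist_eq, homeomorphUnitSphereProd_apply_fst_coe, dist_eq_norm]
    linarith [norm_sub_le_norm_sub_add_norm_sub (‖(y : E)‖⁻¹ • (y : E)) y x]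
  · rw [mem_preimage, homeomorphUnitSphereProd_apply_snd_coe]
    constructor <;> linarith [abs_lt.1 hradius]

variable [FiniteDimensional ℝ E] [MeasurableSpace E] [BorelSpace E]
  (μ : Measure E) [μ.IsAddHaarMeasure]

lemma measure_ball_le_toSphere_ball_mul (x : sphere (0 : E) 1) {ε : ℝ} (hε2 : ε ≤ 2) :
    μ (ball (x : E) (ε / 2)) ≤
      μ.toSphere (ball x ε) *
        Measure.volumeIoiPow (Module.finrank ℝ E - 1)
          (Subtype.val ⁻¹' Ioo (1 - ε / 2) (1 + ε / 2)) := by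
  have : Nontrivial E := ⟨x, 0, ne_zero_of_mem_unit_sphere x⟩
  have hsub : ball (x : E) (ε / 2) ⊆ {0}ᶜ := by
    rintro y hy rfl
    rw [mem_ball, dist_zero_left, norm_eq_of_mem_sphere] at hy
    linarith
  calc μ (ball (x : E) (ε / 2))
      = μ.comap ((↑) : ({0}ᶜ : Set E) → E) (Subtype.val ⁻¹' ball (x : E) (ε / 2)) := by
        rw [comap_subtype_coe_apply (measurableSet_singleton _).compl,
          Subtype.image_preimage_coe, inter_eq_right.2 hsub]
    _ ≤ μ.comap ((↑) : ({0}ᶜ : Set E) → E) (homeomorphUnitSphereProd E ⁻¹'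
          (ball x ε ×ˢ (Subtype.val ⁻¹' Ioo (1 - ε / 2) (1 + ε / 2)))) :=
        measure_mono fun y hy => homeomorphUnitSphereProd_mem_ball_prod_Ioo x y hy
    _ = _ := by
        rw [μ.measurePreserving_homeomorphUnitSphereProd.measure_preimage
          (measurableSet_ball.prod (measurable_subtype_coe measurableSet_Ioo)).nullMeasurableSet,
          Measure.prod_prod]

lemma exists_mul_pow_le_toSphere_ball :
    ∃ C > (0 : ℝ), ∀ (x : sphere (0 : E) 1) (ε : ℝ), 0 < ε → ε ≤ 2 →
      C * ε ^ (Module.finrank ℝ E - 1) ≤ μ.toSphere.real (ball x ε) := by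
  set n := Module.finrank ℝ E - 1
  have hunit : 0 < μ.real (ball (0 : E) 1) :=
    ENNReal.toReal_pos (measure_ball_pos μ 0 one_pos).ne' measure_ball_lt_top.ne
  refine ⟨μ.real (ball (0 : E) 1) / (2 ^ n * 2 ^ (n + 1)), by positivity, fun x ε hε hε2 => ?_⟩
  have : Nontrivial E := ⟨x, 0, ne_zero_of_mem_unit_sphere x⟩
  have hdim : Module.finrank ℝ E = n + 1 := (Nat.sub_add_cancel Module.finrank_pos).symm
  have hradial : Measure.volumeIoiPow n (Subtype.val ⁻¹' Ioo (1 - ε / 2) (1 + ε / 2)) ≤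
      ENNReal.ofReal (2 ^ n * ε) := by
    refine (volumeIoiPow_preimage_Ioo_le n (by positivity)).trans (ENNReal.ofReal_le_ofReal ?_)
    rw [add_sub_sub_cancel, add_halves]
    gcongr
    linarith
  have hball : (ε / 2) ^ (n + 1) * μ.real (ball (0 : E) 1) ≤
      μ.toSphere.real (ball x ε) * (2 ^ n * ε) := by
    have hle := (measure_ball_le_toSphere_ball_mul μ x hε2).trans (mul_le_mul_right hradial _)
    have hreal := ENNReal.toReal_mono
      (ENNReal.mul_ne_top (measure_ne_top _ _) ENNReal.ofReal_ne_top) hle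
    rwa [Measure.addHaar_ball_of_pos μ _ (by positivity), hdim, ENNReal.toReal_mul,
      ENNReal.toReal_mul, ENNReal.toReal_ofReal (by positivity),
      ENNReal.toReal_ofReal (by positivity)] at hreal
  refine le_of_mul_le_mul_right (hball.trans' (le_of_eq ?_)) (by positivity : 0 < 2 ^ n * ε)
  rw [div_pow, pow_succ ε]
  field_simp

lemma exists_mul_pow_le_toSphere_shell (hE : 1 < Module.finrank ℝ E) :
    ∃ C > (0 : ℝ), ∀ (x : sphere (0 : E) 1) (ε : ℝ), 0 < ε → ε ≤ 2 →
      C * ε ^ (Module.finrank ℝ E - 1) ≤ μ.toSphere.real (closedBall x ε \ ball x (ε / 2)) := by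
  obtain ⟨C, hC, hball⟩ := exists_mul_pow_le_toSphere_ball μ
  refine ⟨C / 4 ^ (Module.finrank ℝ E - 1), by positivity, fun x ε hε hε2 => ?_⟩
  obtain ⟨y, hy⟩ := exists_dist_eq_of_mem_sphere (Module.one_lt_rank_of_one_lt_finrank hE) x
    (t := 3 * ε / 4) ⟨by linarith, by linarith⟩
  have hsub : ball y (ε / 4) ⊆ closedBall x ε \ ball x (ε / 2) := by
    intro z hz
    rw [mem_ball] at hz
    rw [Set.mem_sdiff, mem_closedBall, mem_ball, not_lt]
    constructor <;> linarith [dist_triangle z y x, dist_triangle_left y x z]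
  calc C / 4 ^ (Module.finrank ℝ E - 1) * ε ^ (Module.finrank ℝ E - 1)
      = C * (ε / 4) ^ (Module.finrank ℝ E - 1) := by rw [div_pow]; ring
    _ ≤ μ.toSphere.real (ball y (ε / 4)) := hball y _ (by linarith) (by linarith)
    _ ≤ _ := measureReal_mono hsub

end Sphere

lemma rpow_le_two_rpow_abs {t : ℝ} (ht : t ∈ Icc (2⁻¹ : ℝ) 2) (p : ℝ) : t ^ p ≤ 2 ^ |p| := by
  have ht0 : 0 < t := lt_of_lt_of_le (by norm_num) ht.1
  have hlog : |log t| ≤ log 2 := by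
    rw [abs_le, ← log_inv]
    exact ⟨log_le_log (by norm_num) ht.1, log_le_log ht0 ht.2⟩
  rw [rpow_def_of_pos ht0, rpow_def_of_pos two_pos, exp_le_exp]
  calc log t * p ≤ |log t| * |p| := (le_abs_self _).trans (abs_mul _ _).le
    _ ≤ log 2 * |p| := by gcongr

lemma exists_mul_rpow_le_of_eventually_le_mul_rpow {f : ℝ → ℝ} {p K : ℝ} (hf : ∀ θ, 0 ≤ f θ)
    (hK : 0 < K) (hsing : ∀ᶠ θ in 𝓝[>] 0, K ≤ f θ * θ ^ p) :
    ∃ c > 0, ∀ᶠ r in atTop, ∀ θ ∈ Icc (r⁻¹ / 2) (2 * r⁻¹), c * r ^ p ≤ f θ := by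
  obtain ⟨δ, hδ, hδsing⟩ := mem_nhdsGT_iff_exists_Ioo_subset.1 hsing
  refine ⟨K / 2 ^ |p|, by positivity, ?_⟩
  filter_upwards [eventually_gt_atTop 0, eventually_gt_atTop (2 / δ)] with r hr hrδ θ hθ
  have hθ0 : 0 < θ := lt_of_lt_of_le (by positivity) hθ.1
  have hθδ : θ < δ := hθ.2.trans_lt ((div_lt_comm₀ hr hδ).2 hrδ)
  have hscale : r * θ ∈ Icc (2⁻¹ : ℝ) 2 := by
    constructor
    · calc (2⁻¹ : ℝ) = r * (r⁻¹ / 2) := by field_simp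
        _ ≤ r * θ := by gcongr; exact hθ.1
    · calc r * θ ≤ r * (2 * r⁻¹) := by gcongr; exact hθ.2
        _ = 2 := by field_simp
  calc K / 2 ^ |p| * r ^ p ≤ f θ * θ ^ p / 2 ^ |p| * r ^ p := by
        gcongr
        exact hδsing ⟨hθ0, hθδ⟩
    _ = f θ * ((r * θ) ^ p / 2 ^ |p|) := by
        rw [mul_rpow hr.le hθ0.le]
        ring
    _ ≤ f θ := mul_le_of_le_one_right (hf θ)
        (div_le_one_of_le₀ (rpow_le_two_rpow_abs hscale p) (by positivity))

section Angle

open InnerProductGeometry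

variable {E : Type*} [NormedAddCommGroup E] [InnerProductSpace ℝ E] {x y : E}

lemma norm_sub_eq_two_mul_sin_half_angle (hx : ‖x‖ = 1) (hy : ‖y‖ = 1) :
    ‖x - y‖ = 2 * sin (angle x y / 2) := by
  have hsin : 0 ≤ sin (angle x y / 2) :=
    sin_nonneg_of_nonneg_of_le_pi (by linarith [angle_nonneg x y])
      (by linarith [angle_le_pi x y, pi_pos])
  have hcos : cos (angle x y) = 1 - 2 * sin (angle x y / 2) ^ 2 := by
    rw [← cos_two_mul_eq_one_sub, mul_div_cancel₀ _ two_ne_zero]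
  have hinner : ⟪x, y⟫ = cos (angle x y) := by rw [cos_angle, hx, hy, mul_one, div_one]
  rw [← sq_eq_sq₀ (norm_nonneg _) (by positivity), norm_sub_sq_real, hinner, hcos, hx, hy]
  ring

lemma norm_sub_le_angle (hx : ‖x‖ = 1) (hy : ‖y‖ = 1) : ‖x - y‖ ≤ angle x y := by
  rw [norm_sub_eq_two_mul_sin_half_angle hx hy]
  linarith [sin_le (by linarith [angle_nonneg x y] : 0 ≤ angle x y / 2)]

lemma angle_le_two_mul_norm_sub (hx : ‖x‖ = 1) (hy : ‖y‖ = 1) : angle x y ≤ 2 * ‖x - y‖ := by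
  have hjordan : 2 / π * (angle x y / 2) ≤ sin (angle x y / 2) :=
    mul_le_sin (by linarith [angle_nonneg x y]) (by linarith [angle_le_pi x y])
  have hpi : 1 / 4 ≤ 1 / π := one_div_le_one_div_of_le pi_pos pi_le_four
  rw [norm_sub_eq_two_mul_sin_half_angle hx hy]
  calc angle x y = 4 * (1 / 4 * angle x y) := by ring
    _ ≤ 4 * (1 / π * angle x y) := by gcongr; exact angle_nonneg x y
    _ = 4 * (2 / π * (angle x y / 2)) := by ring
    _ ≤ 2 * (2 * sin (angle x y / 2)) := by linarith

end Angle

lemma norm_half_smul_sub_half_norm_smul {E : Type*} [NormedAddCommGroup E] [NormedSpace ℝ E]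
    (ξ y : E) : ‖(1 / 2 : ℝ) • ξ - (‖ξ‖ / 2) • y‖ = ‖ξ‖ / 2 * ‖NormedSpace.normalize ξ - y‖ := by
  have hfactor : (1 / 2 : ℝ) • ξ - (‖ξ‖ / 2) • y =
      (‖ξ‖ / 2) • (NormedSpace.normalize ξ - y) := by
    nth_rw 1 [← NormedSpace.norm_smul_normalize ξ]
    rw [smul_smul, one_div_mul_eq_div, smul_sub]
  rw [hfactor, norm_smul, Real.norm_of_nonneg (by positivity)]

lemma ofReal_mul_measureReal_le_lintegral {α : Type*} [MeasurableSpace α] {μ : Measure α}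
    [IsFiniteMeasure μ] {A : Set α} (hA : MeasurableSet A) {f : α → ℝ} {m : ℝ}
    (hf : ∀ x ∈ A, m ≤ f x) :
    ENNReal.ofReal (m * μ.real A) ≤ ∫⁻ x, ENNReal.ofReal (f x) ∂μ :=
  calc ENNReal.ofReal (m * μ.real A) = ∫⁻ _ in A, ENNReal.ofReal m ∂μ := by
        rw [setLIntegral_const, ENNReal.ofReal_mul' measureReal_nonneg, ofReal_measureReal]
    _ ≤ ∫⁻ x in A, ENNReal.ofReal (f x) ∂μ :=
        setLIntegral_mono' hA fun x hx => ENNReal.ofReal_le_ofReal (hf x hx)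
    _ ≤ ∫⁻ x, ENNReal.ofReal (f x) ∂μ := setLIntegral_le_lintegral _ _

section Coercivity

open InnerProductGeometry NormedSpace

variable {E : Type*} [NormedAddCommGroup E] [InnerProductSpace ℝ E]

lemma mul_div_le_collision_integrand_of_mem_shell {b : ℝ → ℝ} {g : E → ℝ} {κ m : ℝ} {ξ σ : E}
    (hξ : ξ ≠ 0) (hσ : ‖σ‖ = 1)
    (hshell : σ ∈ closedBall (normalize ξ) ‖ξ‖⁻¹ \ ball (normalize ξ) (‖ξ‖⁻¹ / 2))
    (hm : 0 ≤ m) (hb : ∀ θ ∈ Icc (‖ξ‖⁻¹ / 2) (2 * ‖ξ‖⁻¹), m ≤ b (cos θ))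
    (hκ : 0 ≤ κ) (hg : ∀ η, κ * min 1 (‖η‖ ^ 2) ≤ g η) :
    m * (κ / 16) ≤ b (⟪ξ, σ⟫ / ‖ξ‖) * g ((1 / 2 : ℝ) • ξ - (‖ξ‖ / 2) • σ) := by
  have hunit : ‖normalize ξ‖ = 1 := norm_normalize_eq_one_iff.2 hξ
  rw [Set.mem_sdiff, mem_closedBall, mem_ball, not_lt, dist_comm, dist_eq_norm] at hshell
  obtain ⟨hupper, hlower⟩ := hshell
  have hcos : ⟪ξ, σ⟫ / ‖ξ‖ = cos (angle (normalize ξ) σ) := by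
    rw [angle_normalize_left, cos_angle, hσ, mul_one]
  have hkernel : m ≤ b (⟪ξ, σ⟫ / ‖ξ‖) := by
    rw [hcos]
    exact hb _ ⟨hlower.trans (norm_sub_le_angle hunit hσ),
      (angle_le_two_mul_norm_sub hunit hσ).trans (by gcongr)⟩
  have hnorm : 1 / 4 ≤ ‖(1 / 2 : ℝ) • ξ - (‖ξ‖ / 2) • σ‖ := by
    rw [norm_half_smul_sub_half_norm_smul]
    calc (1 / 4 : ℝ) = ‖ξ‖ / 2 * (‖ξ‖⁻¹ / 2) := by
          field_simp [norm_ne_zero_iff.2 hξ]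
          norm_num
      _ ≤ _ := by gcongr
  have hsymbol : κ / 16 ≤ g ((1 / 2 : ℝ) • ξ - (‖ξ‖ / 2) • σ) := by
    refine (mul_le_mul_of_nonneg_left (le_min (by norm_num) ?_) hκ).trans (hg _)
    calc (16⁻¹ : ℝ) = (1 / 4) ^ 2 := by norm_num
      _ ≤ _ := by gcongr
  exact mul_le_mul hkernel hsymbol (by positivity) (hm.trans hkernel)

theorem standard_coercivity_general [FiniteDimensional ℝ E] [MeasurableSpace E] [BorelSpace E]
    (μ : Measure E) [μ.IsAddHaarMeasure] (hE : 1 < Module.finrank ℝ E)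
    {s K : ℝ} (hK : 0 < K) {b : ℝ → ℝ} (hb_nonneg : ∀ x, 0 ≤ b x)
    (hb_sing : ∀ᶠ θ in 𝓝[>] 0, K ≤ b (cos θ) * θ ^ (Module.finrank ℝ E - 1 + 2 * s))
    {g : E → ℝ} {κ : ℝ} (hκ : 0 < κ) (hlow : ∀ η, κ * min 1 (‖η‖ ^ 2) ≤ g η) :
    ∃ R > 0, ∃ c > 0, ∀ ξ : E, R ≤ ‖ξ‖ →
      ENNReal.ofReal (c * ‖ξ‖ ^ (2 * s)) ≤
        ∫⁻ σ, ENNReal.ofReal (b (⟪ξ, (σ : E)⟫ / ‖ξ‖) *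
          g ((1 / 2 : ℝ) • ξ - (‖ξ‖ / 2) • (σ : E))) ∂μ.toSphere := by
  obtain ⟨C, hC, hmeasure⟩ := exists_mul_pow_le_toSphere_shell μ hE
  obtain ⟨c, hc, hkernel⟩ :=
    exists_mul_rpow_le_of_eventually_le_mul_rpow (fun θ => hb_nonneg (cos θ)) hK hb_sing
  obtain ⟨R, hR⟩ := (hkernel.and (eventually_ge_atTop 1)).exists_forall_of_atTop
  refine ⟨R, one_pos.trans_le (hR R le_rfl).2, c * (κ / 16) * C, by positivity, fun ξ hξR => ?_⟩
  obtain ⟨hb, hξ1⟩ := hR ‖ξ‖ hξR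
  have hξ0 : 0 < ‖ξ‖ := one_pos.trans_le hξ1
  have hξ : ξ ≠ 0 := norm_pos_iff.1 hξ0
  set e : sphere (0 : E) 1 := ⟨normalize ξ, by simpa using hξ⟩
  have hpow : ‖ξ‖ ^ (Module.finrank ℝ E - 1 + 2 * s) * ‖ξ‖⁻¹ ^ (Module.finrank ℝ E - 1) =
      ‖ξ‖ ^ (2 * s) := by
    rw [rpow_add hξ0, ← Nat.cast_pred (one_pos.trans hE), rpow_natCast, inv_pow]
    field_simp
  calc ENNReal.ofReal (c * (κ / 16) * C * ‖ξ‖ ^ (2 * s))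
      = ENNReal.ofReal (c * ‖ξ‖ ^ (Module.finrank ℝ E - 1 + 2 * s) * (κ / 16) *
          (C * ‖ξ‖⁻¹ ^ (Module.finrank ℝ E - 1))) := by
        rw [← hpow]
        ring_nf
    _ ≤ ENNReal.ofReal (c * ‖ξ‖ ^ (Module.finrank ℝ E - 1 + 2 * s) * (κ / 16) *
          μ.toSphere.real (closedBall e ‖ξ‖⁻¹ \ ball e (‖ξ‖⁻¹ / 2))) := by
        gcongr
        exact hmeasure e _ (by positivity) ((inv_le_one_of_one_le₀ hξ1).trans one_le_two)
    _ ≤ _ := ofReal_mul_measureReal_le_lintegral (measurableSet_closedBall.diff measurableSet_ball)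
        fun σ hσ => mul_div_le_collision_integrand_of_mem_shell hξ (norm_eq_of_mem_sphere σ) hσ
          (by positivity) hb hκ.le hlow

end Coercivity

/-- standard coercivity of the collision kernel from a uniform
Fourier lower bound `1 - |φ(η)| ≥ κ min(1,|η|²)`. -/
theorem standard_coercivity
    (s K : ℝ) (hs0 : 0 < s) (hs1 : s < 1) (hK : 0 < K)
    (b : ℝ → ℝ) (hb_meas : Measurable b) (hb_nonneg : ∀ x, 0 ≤ b x)
    (hb_sing : KernelSingular b s K)
    (φ : E3 → ℂ) (hφ : IsCharFn φ)
    (κ : ℝ) (hκ : 0 < κ)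
    (hlow : ∀ η : E3, κ * min 1 (‖η‖ ^ 2) ≤ 1 - ‖φ η‖) :
    ∃ R > (0:ℝ), ∃ c > (0:ℝ), ∀ ξ : E3, R ≤ ‖ξ‖ →
      ENNReal.ofReal (c * ‖ξ‖ ^ (2*s)) ≤
        ∫⁻ σ, ENNReal.ofReal
          (b (⟪ξ, (σ : E3)⟫ / ‖ξ‖) * (1 - ‖φ (xiMinus ξ σ)‖)) ∂sphμ := by
  have hdim : (Module.finrank ℝ E3 - 1 + 2 * s : ℝ) = 2 + 2 * s := by norm_num
  exact standard_coercivity_general volume (by simp) (half_pos hK) hb_nonneg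
    (by simpa only [hdim] using hb_sing.eventually_const_le (half_lt_self hK)) hκ hlow
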